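/- (Key lemma in the proof of Theorem 3, (i)⇒(vi)) Assume Ǎ is invertible. If there exist an index k ∈ {1,…,K}, a value t ∈ [−p̂_k, p̂_k], a sign vector ε with ε_i ∈ {−1,1} for all i ≠ k, a real number λ with |λ| ≥ 1, and a nonzero vector x ∈ ℝⁿ such that (t·Ǎ⁻¹A_k + ∑_{i≠k} ε_i p̂_i Ǎ⁻¹A_i) x = λ x, then the interval parametric matrix {A(p) : p ∈ P} is singular, i.e., there exists p ∈ P such that A(p) is not invertible. -/

import Mathlib

open Finset Matrix

/-- Key lemma in the proof of Theorem 3, (i)⇒(vi): if `Ǎ` is invertible and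
`B := t • Ǎ⁻¹ * A k + ∑_{i ≠ k} (ε i * p̂ i) • Ǎ⁻¹ * A i` has a real eigenvalue `l`
with `|l| ≥ 1` (for some `k`, `t ∈ [−p̂ k, p̂ k]` and sign vector `ε`), then the
interval parametric matrix `{A(p) : p ∈ P}` is singular. -/
theorem singular_of_real_eigenvalue_ge_one
    (n K : ℕ) (hn : 1 ≤ n) (hK : 1 ≤ K)
    (A₀ : Matrix (Fin n) (Fin n) ℝ) (A : Fin K → Matrix (Fin n) (Fin n) ℝ)
    (pc ph : Fin K → ℝ) (hph : ∀ k, 0 < ph k)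
    (hAc : IsUnit (A₀ + ∑ i, pc i • A i))
    (k : Fin K) (t : ℝ) (ht : t ∈ Set.Icc (-(ph k)) (ph k))
    (ε : Fin K → ℝ) (hε : ∀ i, i ≠ k → ε i = 1 ∨ ε i = -1)
    (l : ℝ) (hl : 1 ≤ |l|) (x : Fin n → ℝ) (hx : x ≠ 0)
    (heig : (t • ((A₀ + ∑ i, pc i • A i)⁻¹ * A k) +
        ∑ i ∈ Finset.univ.erase k,
          (ε i * ph i) • ((A₀ + ∑ j, pc j • A j)⁻¹ * A i)) *ᵥ x = l • x) :
    ∃ p : Fin K → ℝ, (∀ j, |p j - pc j| ≤ ph j) ∧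
      ¬ IsUnit (A₀ + ∑ j, p j • A j) := by
  have hl0 : l ≠ 0 := by
    rintro rfl
    norm_num at hl
  obtain ⟨d, hd⟩ : ∃ d : Fin K → ℝ, d = fun i => if i = k then t else ε i * ph i := ⟨_, rfl⟩
  have hdb : ∀ i, |d i| ≤ ph i := by
    intro i
    rw [hd]
    by_cases h : i = k
    · subst h
      simpa using abs_le.mpr ht
    · have hp := hph i
      rcases hε i h with h1 | h1 <;> simp [h, h1, abs_of_pos hp]
  have hA : (A₀ + ∑ j, (pc j - l⁻¹ * d j) • A j) =
      (A₀ + ∑ i, pc i • A i) - l⁻¹ • ∑ i, d i • A i := by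
    simp only [sub_smul, Finset.sum_sub_distrib, Finset.smul_sum, mul_smul]
    abel
  generalize hM : A₀ + ∑ i, pc i • A i = M at *
  have hB : t • (M⁻¹ * A k) + ∑ i ∈ Finset.univ.erase k, (ε i * ph i) • (M⁻¹ * A i)
      = M⁻¹ * ∑ i, d i • A i := by
    rw [Finset.mul_sum, ← Finset.add_sum_erase _ _ (Finset.mem_univ k)]
    congr 1
    · simp [hd]
    · refine Finset.sum_congr rfl fun i hi => ?_
      simp [hd, Finset.ne_of_mem_erase hi]
  rw [hB] at heig
  have hdet : IsUnit M.det := (Matrix.isUnit_iff_isUnit_det M).mp hAc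
  have hD : (∑ i, d i • A i) *ᵥ x = l • (M *ᵥ x) := by
    have := congrArg (fun v => M *ᵥ v) heig
    simpa only [Matrix.mulVec_mulVec, Matrix.mul_nonsing_inv_cancel_left M _ hdet,
      Matrix.mulVec_smul] using this
  refine ⟨fun j => pc j - l⁻¹ * d j, fun j => ?_, ?_⟩
  · have h1 : |l|⁻¹ ≤ 1 := inv_le_one_of_one_le₀ hl
    have h2 : pc j - l⁻¹ * d j - pc j = -(l⁻¹ * d j) := by ring
    rw [h2, abs_neg, abs_mul, abs_inv]
    calc |l|⁻¹ * |d j| ≤ 1 * |d j| := mul_le_mul_of_nonneg_right h1 (abs_nonneg _)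
      _ ≤ ph j := by simpa using hdb j
  · intro hu
    have hz : (A₀ + ∑ j, (pc j - l⁻¹ * d j) • A j) *ᵥ x = 0 := by
      rw [hA, Matrix.sub_mulVec, Matrix.smul_mulVec, hD, smul_smul, inv_mul_cancel₀ hl0,
        one_smul, sub_self]
    apply hx
    apply Matrix.mulVec_injective_of_isUnit hu
    simpa using hz
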